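/- Let a ∈ ℂ with |a| = 1 and a not a root of unity. Then the numerical range of C_{az} on F² equals the open unit disk together with the points {a^m : m ≥ 0}: W(C_{az}) = 𝔻 ∪ {a^m : m ≥ 0}. -/

import Mathlib

open MeasureTheory Complex

/-- The Gaussian measure `π⁻¹ e^{-|z|²} dA(z)` on `ℂ`. -/
noncomputable def gaussMeasure : Measure ℂ :=
  (volume : Measure ℂ).withDensity fun z => ENNReal.ofReal (Real.exp (-(‖z‖ ^ 2)) / Real.pi)

/-- A function is entire if it is differentiable on all of `ℂ`. -/
def Entire (f : ℂ → ℂ) : Prop := Differentiable ℂ f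

/-- The squared Fock-space norm `∫ |f|² dμ`. -/
noncomputable def fockNormSq (f : ℂ → ℂ) : ℝ := ∫ z, ‖f z‖ ^ 2 ∂gaussMeasure

/-- Membership in the Fock space `F²`: entire and square integrable w.r.t. the Gaussian. -/
def MemFock (f : ℂ → ℂ) : Prop :=
  Entire f ∧ Integrable (fun z => ‖f z‖ ^ 2) gaussMeasure

/-- The Fock-space inner product `⟨f, g⟩ = ∫ f ḡ dμ`. -/
noncomputable def fockInner (f g : ℂ → ℂ) : ℂ :=
  ∫ z, f z * (starRingEnd ℂ) (g z) ∂gaussMeasure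

/-- The weighted composition operator `C_{ψ,φ} f = ψ · (f ∘ φ)`. -/
def wcomp (ψ φ f : ℂ → ℂ) : ℂ → ℂ := fun z => ψ z * f (φ z)

/-- Boundedness of `C_{ψ,φ}` on `F²`. -/
def BoundedWCO (ψ φ : ℂ → ℂ) : Prop :=
  ∃ C : ℝ, ∀ f, MemFock f →
    MemFock (wcomp ψ φ f) ∧ fockNormSq (wcomp ψ φ f) ≤ C * fockNormSq f

/-- The numerical range `W(C_{ψ,φ}) = {⟨C_{ψ,φ} f, f⟩ : ‖f‖ = 1}` on `F²`. -/
noncomputable def numRange (ψ φ : ℂ → ℂ) : Set ℂ :=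
  {w | ∃ f, MemFock f ∧ fockNormSq f = 1 ∧ w = fockInner (wcomp ψ φ f) f}

/-- The point spectrum of `C_{ψ,φ}` on `F²`. -/
def pointSpectrum (ψ φ : ℂ → ℂ) : Set ℂ :=
  {lam | ∃ f, MemFock f ∧ f ≠ 0 ∧ wcomp ψ φ f = fun z => lam * f z}

/-- Compactness of `C_{ψ,φ}` on `F²`: it is bounded and the image of every sequence in the
unit ball of `F²` has a subsequence which is Cauchy in the `F²` norm. -/
def CompactWCO (ψ φ : ℂ → ℂ) : Prop :=
  BoundedWCO ψ φ ∧ ∀ f : ℕ → ℂ → ℂ, (∀ k, MemFock (f k) ∧ fockNormSq (f k) ≤ 1) →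
    ∃ g : ℕ → ℕ, StrictMono g ∧ ∀ ε : ℝ, 0 < ε → ∃ N : ℕ, ∀ i, N ≤ i → ∀ j, N ≤ j →
      fockNormSq (fun z => wcomp ψ φ (f (g i)) z - wcomp ψ φ (f (g j)) z) < ε

/-! For `‖a‖ = 1` the operator `C_{az}` is a linear isometry of `F²`. By the equality case of the
Cauchy–Schwarz inequality, a point of modulus `1` in the numerical range of an isometry is an
eigenvalue, and comparing Taylor coefficients in `f (a z) = w f z` shows that the eigenvalues of
`C_{az}` are the powers `a ^ m`. Conversely, eigenvectors of an isometry for distinct eigenvalues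
`μ i` are orthogonal, so the unit vector with coefficients `√(t i)` in normalized eigenvectors
realizes the convex combination `∑ t i • μ i`. The powers of `a` are dense in the unit circle, and
the convex hull of a dense subset of the circle contains the open disk. -/

section ConvexHull

variable {E : Type*} [NormedAddCommGroup E] [NormedSpace ℝ E] [Nontrivial E] {s t : Set E}
  {x : E} {r : ℝ}

theorem closedBall_subset_of_sphere_subset_closure (hr : 0 ≤ r) (ht : Convex ℝ t)
    (ht_closed : IsClosed t) (hst : s ⊆ t) (hs : Metric.sphere x r ⊆ closure s) :
    Metric.closedBall x r ⊆ t := by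
  rw [← convexHull_sphere_eq_closedBall x hr]
  exact convexHull_min (hs.trans (closure_minimal hst ht_closed)) ht

theorem ball_subset_convexHull_of_sphere_subset_closure [FiniteDimensional ℝ E]
    (hs : Metric.sphere x r ⊆ closure s) : Metric.ball x r ⊆ convexHull ℝ s := by
  rcases le_or_gt r 0 with hr | hr
  · simp only [Metric.ball_eq_empty.2 hr, Set.empty_subset]
  have hspan : affineSpan ℝ s = ⊤ := by
    have hball := closedBall_subset_of_sphere_subset_closure hr.le (affineSpan ℝ s).convex
      (affineSpan ℝ s).closed_of_finiteDimensional (subset_affineSpan ℝ s) hs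
    have hne : (interior (affineSpan ℝ s : Set E)).Nonempty :=
      ⟨x, interior_mono hball
        (Metric.ball_subset_interior_closedBall (Metric.mem_ball_self hr))⟩
    simpa using (affineSpan ℝ s).convex.interior_nonempty_iff_affineSpan_eq_top.1 hne
  have hconv := convex_convexHull ℝ s
  have hball := closedBall_subset_of_sphere_subset_closure hr.le hconv.closure isClosed_closure
    ((subset_convexHull ℝ s).trans subset_closure) hs
  calc Metric.ball x r ⊆ interior (closure (convexHull ℝ s)) :=
        Metric.ball_subset_interior_closedBall.trans (interior_mono hball)
    _ = interior (convexHull ℝ s) := hconv.interior_closure_eq_interior_of_nonempty_interior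
        (interior_convexHull_nonempty_iff_affineSpan_eq_top.2 hspan)
    _ ⊆ convexHull ℝ s := interior_subset

end ConvexHull

section NumericalRange

variable {𝕜 E ι : Type*} [RCLike 𝕜] [NormedAddCommGroup E] [InnerProductSpace 𝕜 E]

/-- The numerical range of a linear operator on an inner product space. The inner product is
conjugate-linear in its first argument, so `inner 𝕜 x (T x)` is what is usually written
`⟨T x, x⟩`. -/
def numericalRange (T : Module.End 𝕜 E) : Set 𝕜 :=
  {w | ∃ x : E, ‖x‖ = 1 ∧ inner 𝕜 x (T x) = w}

theorem hasEigenvalue_inner_of_norm_inner_eq_one {T : Module.End 𝕜 E} {x : E} (hx : ‖x‖ = 1)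
    (hTx : ‖T x‖ ≤ 1) (h : ‖inner 𝕜 x (T x)‖ = 1) : T.HasEigenvalue (inner 𝕜 x (T x)) := by
  have hCS : ‖inner 𝕜 x (T x)‖ ≤ ‖T x‖ := by simpa [hx] using norm_inner_le_norm (𝕜 := 𝕜) x (T x)
  have hTx_one : ‖T x‖ = 1 := hTx.antisymm (h ▸ hCS)
  have hx₀ : x ≠ 0 := norm_ne_zero_iff.1 (by simp [hx])
  have hTx₀ : T x ≠ 0 := norm_ne_zero_iff.1 (by simp [hTx_one])
  obtain ⟨r, -, hr⟩ :=
    (norm_inner_eq_norm_iff (𝕜 := 𝕜) hx₀ hTx₀).1 (by rw [h, hx, hTx_one, one_mul])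
  have hinner : inner 𝕜 x (T x) = r := by
    rw [hr, inner_smul_right, inner_self_eq_norm_sq_to_K, hx]
    simp
  rw [hinner]
  exact Module.End.hasEigenvalue_of_hasEigenvector ⟨Module.End.mem_eigenspace_iff.2 hr, hx₀⟩

theorem numericalRange_subset_ball_union_hasEigenvalue {T : Module.End 𝕜 E}
    (hT : ∀ x, ‖T x‖ ≤ ‖x‖) :
    numericalRange T ⊆ Metric.ball 0 1 ∪ {w | T.HasEigenvalue w} := by
  rintro _ ⟨x, hx, rfl⟩
  have hTx : ‖T x‖ ≤ 1 := hx ▸ hT x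
  have hle : ‖inner 𝕜 x (T x)‖ ≤ 1 := calc
    ‖inner 𝕜 x (T x)‖ ≤ ‖x‖ * ‖T x‖ := norm_inner_le_norm x (T x)
    _ ≤ 1 := by rwa [hx, one_mul]
  exact hle.lt_or_eq.imp mem_ball_zero_iff.2 (hasEigenvalue_inner_of_norm_inner_eq_one hx hTx)

theorem convexHull_range_subset_numericalRange {T : Module.End 𝕜 E} {v : ι → E}
    (hv : Orthonormal 𝕜 v) {μ : ι → 𝕜} (hTv : ∀ i, T (v i) = μ i • v i) :
    convexHull ℝ (Set.range μ) ⊆ numericalRange T := by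
  intro w hw
  rw [convexHull_range_eq_exists_affineCombination] at hw
  obtain ⟨s, t, ht, hsum, rfl⟩ := hw
  let c : ι → 𝕜 := fun i => (√(t i) : ℝ)
  have hc : ∀ i ∈ s, starRingEnd 𝕜 (c i) * c i = t i := fun i hi => by
    rw [RCLike.conj_ofReal, ← RCLike.ofReal_mul, Real.mul_self_sqrt (ht i hi)]
  have hT : T (∑ i ∈ s, c i • v i) = ∑ i ∈ s, (c i * μ i) • v i := by
    simp only [map_sum, map_smul, hTv, smul_smul]
  refine ⟨∑ i ∈ s, c i • v i, ?_, ?_⟩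
  · rw [norm_eq_sqrt_re_inner (𝕜 := 𝕜), hv.inner_sum, Finset.sum_congr rfl hc,
      ← RCLike.ofReal_sum, hsum, RCLike.ofReal_re, Real.sqrt_one]
  · rw [hT, hv.inner_sum, s.affineCombination_eq_linear_combination _ _ hsum]
    refine Finset.sum_congr rfl fun i hi => ?_
    rw [← mul_assoc, hc i hi, RCLike.real_smul_eq_coe_mul]

theorem inner_eq_zero_of_isometry_eigenvectors {U : E →ₗᵢ[𝕜] E} {x y : E} {μ ν : 𝕜}
    (hUx : U x = μ • x) (hUy : U y = ν • y) (hμν : μ ≠ ν) : inner 𝕜 x y = 0 := by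
  rcases eq_or_ne x 0 with rfl | hx
  · exact inner_zero_left y
  have hnorm : ‖μ‖ * ‖x‖ = ‖x‖ := by rw [← norm_smul, ← hUx, U.norm_map]
  have hμ : μ * starRingEnd 𝕜 μ = 1 := by
    rw [RCLike.mul_conj, (mul_eq_right₀ (norm_ne_zero_iff.2 hx)).1 hnorm]
    simp
  have hinv : starRingEnd 𝕜 μ * ν * inner 𝕜 x y = inner 𝕜 x y := calc
    starRingEnd 𝕜 μ * ν * inner 𝕜 x y = inner 𝕜 (U x) (U y) := by
      rw [hUx, hUy, inner_smul_left, inner_smul_right, mul_assoc]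
    _ = inner 𝕜 x y := U.inner_map_map x y
  by_contra hne
  have hone : starRingEnd 𝕜 μ * ν = 1 := (mul_eq_right₀ hne).1 hinv
  apply hμν
  linear_combination ν * hμ - μ * hone

theorem convexHull_hasEigenvalue_subset_numericalRange (U : E →ₗᵢ[𝕜] E) :
    convexHull ℝ {w | Module.End.HasEigenvalue U.toLinearMap w} ⊆ numericalRange U.toLinearMap := by
  have hunit (w : {w | Module.End.HasEigenvalue U.toLinearMap w}) :
      ∃ x : E, ‖x‖ = 1 ∧ U x = w.1 • x := by
    obtain ⟨x, hx⟩ := w.2.exists_hasEigenvector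
    refine ⟨((‖x‖⁻¹ : ℝ) : 𝕜) • x, by simpa using norm_smul_inv_norm (𝕜 := 𝕜) hx.2, ?_⟩
    have hUx : U x = w.1 • x := hx.apply_eq_smul
    rw [map_smul, hUx, smul_comm]
  choose v hnorm hUv using hunit
  have hv : Orthonormal 𝕜 v := ⟨hnorm, fun w w' hne =>
    inner_eq_zero_of_isometry_eigenvectors (hUv w) (hUv w') (Subtype.val_injective.ne hne)⟩
  simpa using convexHull_range_subset_numericalRange (T := U.toLinearMap) hv hUv

theorem numericalRange_isometry_of_sphere_subset_closure (U : E →ₗᵢ[𝕜] E)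
    (h : Metric.sphere 0 1 ⊆ closure {w | Module.End.HasEigenvalue U.toLinearMap w}) :
    numericalRange U.toLinearMap =
      Metric.ball 0 1 ∪ {w | Module.End.HasEigenvalue U.toLinearMap w} := by
  refine (numericalRange_subset_ball_union_hasEigenvalue fun x => (U.norm_map x).le).antisymm ?_
  refine Set.Subset.trans ?_ (convexHull_hasEigenvalue_subset_numericalRange U)
  exact Set.union_subset (ball_subset_convexHull_of_sphere_subset_closure h)
    (subset_convexHull ℝ _)

end NumericalRange

section Circle

theorem denseRange_circle_pow {z : Circle} (hz : ¬IsOfFinOrder z) :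
    DenseRange fun m : ℕ => z ^ m := by
  have : Fact ((0 : ℝ) < 1) := ⟨one_pos⟩
  let e := AddCircle.homeomorphCircle (one_ne_zero (α := ℝ))
  obtain ⟨θ, rfl⟩ := e.surjective z
  have he (m : ℕ) : e (m • θ) = e θ ^ m := by
    simp only [e, AddCircle.homeomorphCircle_apply, AddCircle.toCircle_nsmul]
  have he₀ : e 0 = 1 := by
    simp only [e, AddCircle.homeomorphCircle_apply, AddCircle.toCircle_zero]
  have hθ : addOrderOf θ = 0 := addOrderOf_eq_zero_iff'.2 fun m hm hzero =>
    hz (isOfFinOrder_iff_pow_eq_one.2 ⟨m, hm, by rw [← he, hzero, he₀]⟩)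
  have hdense : DenseRange fun m : ℕ => m • θ :=
    denseRange_zsmul_iff_nsmul.1 (AddCircle.denseRange_zsmul_iff.2 hθ)
  simpa only [Function.comp_def, he] using e.surjective.denseRange.comp hdense e.continuous

theorem sphere_subset_closure_range_pow {a : ℂ} (ha : ‖a‖ = 1) (hroot : ¬IsOfFinOrder a) :
    Metric.sphere (0 : ℂ) 1 ⊆ closure (Set.range fun m : ℕ => a ^ m) := by
  let z : Circle := ⟨a, mem_sphere_zero_iff_norm.2 ha⟩
  have hz : ¬IsOfFinOrder z := fun h => hroot (Circle.coeHom.isOfFinOrder h)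
  intro w hw
  have hmem := image_closure_subset_closure_image (f := fun x : Circle => (x : ℂ))
    continuous_subtype_val
    ⟨⟨w, hw⟩, denseRange_circle_pow hz _, rfl⟩
  rwa [← Set.range_comp] at hmem

end Circle

section Gaussian

theorem measurePreserving_withDensity_comp {α β : Type*} [MeasurableSpace α] [MeasurableSpace β]
    {μ : Measure α} {ν : Measure β} {T : α → β} (hT : MeasurePreserving T μ ν)
    {ρ : β → ENNReal} (hρ : Measurable ρ) :
    MeasurePreserving T (μ.withDensity (ρ ∘ T)) (ν.withDensity ρ) := by
  refine ⟨hT.measurable, Measure.ext fun s hs => ?_⟩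
  rw [Measure.map_apply hT.measurable hs, withDensity_apply _ (hT.measurable hs),
    withDensity_apply _ hs]
  exact hT.setLIntegral_comp_preimage hs hρ

theorem measurePreserving_mul_gaussMeasure {a : ℂ} (ha : ‖a‖ = 1) :
    MeasurePreserving (fun z => a * z) gaussMeasure gaussMeasure := by
  have hvol : MeasurePreserving (fun z : ℂ => a * z) volume volume :=
    (rotation ⟨a, mem_sphere_zero_iff_norm.2 ha⟩).measurePreserving
  have hgauss := measurePreserving_withDensity_comp hvol
    (ρ := fun z => ENNReal.ofReal (Real.exp (-(‖z‖ ^ 2)) / Real.pi)) (by fun_prop)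
  simpa only [gaussMeasure, Function.comp_def, norm_mul, ha, one_mul] using hgauss

instance gaussMeasure.isOpenPosMeasure : gaussMeasure.IsOpenPosMeasure := by
  refine Measure.AbsolutelyContinuous.isOpenPosMeasure (μ := (volume : Measure ℂ)) ?_
  refine withDensity_absolutelyContinuous' (by fun_prop) (ae_of_all _ fun z => ?_)
  simp only [ne_eq, ENNReal.ofReal_eq_zero, not_le]
  positivity

theorem integrable_norm_pow_gaussMeasure (n : ℕ) :
    Integrable (fun z : ℂ => ‖z‖ ^ n) gaussMeasure := by
  have hvol : Integrable fun z : ℂ => ‖z‖ ^ (n : ℝ) * Real.exp (-‖z‖ ^ (2 : ℝ)) := by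
    refine Integrable.of_integral_ne_zero ?_
    rw [Complex.integral_rpow_mul_exp_neg_rpow one_le_two (by linarith [n.cast_nonneg (α := ℝ)])]
    have := Real.Gamma_pos_of_pos (s := ((n : ℝ) + 2) / 2) (by positivity)
    positivity
  rw [gaussMeasure, integrable_withDensity_iff_integrable_smul' (by fun_prop)
    (ae_of_all _ fun _ => ENNReal.ofReal_lt_top)]
  refine (hvol.div_const Real.pi).congr (ae_of_all _ fun z => ?_)
  dsimp only
  rw [ENNReal.toReal_ofReal (by positivity), Real.rpow_natCast, Real.rpow_two, smul_eq_mul]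
  ring

end Gaussian

section MemFock

theorem memFock_iff {f : ℂ → ℂ} : MemFock f ↔ Differentiable ℂ f ∧ MemLp f 2 gaussMeasure :=
  and_congr_right fun hf =>
    (memLp_two_iff_integrable_sq_norm (Differentiable.continuous hf).aestronglyMeasurable).symm

theorem MemFock.integrable_mul_conj {f g : ℂ → ℂ} (hf : MemFock f) (hg : MemFock g) :
    Integrable (fun z => f z * starRingEnd ℂ (g z)) gaussMeasure :=
  (memFock_iff.1 hf).2.integrable_mul (memFock_iff.1 hg).2.star

theorem memFock_pow (m : ℕ) : MemFock fun z => z ^ m :=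
  ⟨differentiable_pow m, by
    simpa only [norm_pow, ← pow_mul] using integrable_norm_pow_gaussMeasure (m * 2)⟩

theorem MemFock.comp_mul {f : ℂ → ℂ} (hf : MemFock f) {a : ℂ} (ha : ‖a‖ = 1) :
    MemFock fun z => f (a * z) := by
  have hdiff : Differentiable ℂ f := hf.1
  have hint := (measurePreserving_mul_gaussMeasure ha).integrable_comp_of_integrable hf.2
  exact ⟨hdiff.comp (differentiable_id.const_mul a), hint⟩

theorem fockInner_self (f : ℂ → ℂ) : fockInner f f = fockNormSq f := by
  simp only [fockInner, fockNormSq, ← integral_complex_ofReal, Complex.mul_conj', ofReal_pow]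

theorem fockNormSq_comp_mul (f : ℂ → ℂ) {a : ℂ} (ha : ‖a‖ = 1) :
    fockNormSq (fun z => f (a * z)) = fockNormSq f :=
  (measurePreserving_mul_gaussMeasure ha).integral_comp
    (measurableEmbedding_mulLeft₀ (norm_ne_zero_iff.1 (by simp [ha]))) fun z => ‖f z‖ ^ 2

theorem MemFock.eq_zero_of_fockNormSq_eq_zero {f : ℂ → ℂ} (hf : MemFock f) (h : fockNormSq f = 0) :
    f = 0 := by
  have hae := (integral_eq_zero_iff_of_nonneg (fun z => by positivity) hf.2).1 h
  refine (Continuous.ae_eq_iff_eq gaussMeasure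
    (Differentiable.continuous hf.1) continuous_zero).1 ?_
  filter_upwards [hae] with z hz
  simpa using hz

end MemFock

theorem exists_eq_pow_of_comp_mul_eq {f : ℂ → ℂ} (hf : Differentiable ℂ f) (hne : f ≠ 0) {a w : ℂ}
    (h : ∀ z, f (a * z) = w * f z) : ∃ m : ℕ, w = a ^ m := by
  obtain ⟨m, hm⟩ : ∃ m, iteratedDeriv m f 0 ≠ 0 := by
    by_contra! hzero
    apply hne
    ext z
    rw [← Complex.taylorSeries_eq_of_entire' (c := 0) (z := z) hf]
    simp [hzero]
  have hderiv : w * iteratedDeriv m f 0 = a ^ m * iteratedDeriv m f 0 := calc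
    w * iteratedDeriv m f 0 = iteratedDeriv m (fun z => f (a * z)) 0 := by
      rw [funext h, iteratedDeriv_const_mul_field]
    _ = a ^ m * iteratedDeriv m f (a * 0) :=
      congrFun (iteratedDeriv_comp_const_mul hf.contDiff a) 0
    _ = a ^ m * iteratedDeriv m f 0 := by rw [mul_zero]
  exact ⟨m, mul_right_cancel₀ hm hderiv⟩

section FockSpace

/-- The Fock space `F²` as a linear subspace of the space of all functions `ℂ → ℂ`. -/
def fockSubmodule : Submodule ℂ (ℂ → ℂ) where
  carrier := {f | MemFock f}
  zero_mem' := memFock_iff.2 ⟨differentiable_const 0, MemLp.zero⟩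
  add_mem' hf hg := by
    obtain ⟨hf, hf'⟩ := memFock_iff.1 hf
    obtain ⟨hg, hg'⟩ := memFock_iff.1 hg
    exact memFock_iff.2 ⟨hf.add hg, hf'.add hg'⟩
  smul_mem' c f hf := by
    obtain ⟨hf, hf'⟩ := memFock_iff.1 hf
    exact memFock_iff.2 ⟨hf.const_smul c, hf'.const_smul c⟩

/-- The Fock space `F²` as an inner product space. It is a copy of `fockSubmodule`, because the
latter carries the topology of pointwise convergence, which is not that of the Fock norm. -/
def FockSpace : Type := fockSubmodule

namespace FockSpace

noncomputable instance : AddCommGroup FockSpace := inferInstanceAs (AddCommGroup fockSubmodule)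

noncomputable instance : Module ℂ FockSpace := inferInstanceAs (Module ℂ fockSubmodule)

/-- The Fock inner product in Mathlib's convention: conjugate-linear in the first argument. -/
noncomputable abbrev core : InnerProductSpace.Core ℂ FockSpace where
  inner f g := fockInner g.1 f.1
  conj_inner_symm f g := by
    simp only [fockInner, ← integral_conj, map_mul, conj_conj, mul_comm]
  re_inner_nonneg f := by
    rw [fockInner_self]
    exact integral_nonneg fun z => by positivity
  add_left f g h := by
    simp only [fockInner, ← mul_add, ← map_add,
      ← integral_add (h.2.integrable_mul_conj f.2) (h.2.integrable_mul_conj g.2)]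
    rfl
  smul_left f g c := by
    rw [fockInner, fockInner, ← integral_const_mul]
    refine integral_congr_ae (ae_of_all _ fun z => ?_)
    change g.1 z * starRingEnd ℂ (c * f.1 z) = _
    rw [map_mul, mul_left_comm]
  definite f hf := by
    rw [fockInner_self] at hf
    exact Subtype.ext (f.2.eq_zero_of_fockNormSq_eq_zero (ofReal_eq_zero.1 hf))

noncomputable instance : NormedAddCommGroup FockSpace := core.toNormedAddCommGroup

noncomputable instance : InnerProductSpace ℂ FockSpace := InnerProductSpace.ofCore core.toCore

theorem inner_eq_fockInner (f g : FockSpace) : inner ℂ f g = fockInner g.1 f.1 := rfl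

theorem norm_sq_eq_fockNormSq (f : FockSpace) : ‖f‖ ^ 2 = fockNormSq f.1 := by
  rw [@norm_sq_eq_re_inner ℂ, inner_eq_fockInner, fockInner_self]
  exact ofReal_re _

theorem norm_eq_one_iff {f : FockSpace} : ‖f‖ = 1 ↔ fockNormSq f.1 = 1 := by
  rw [← norm_sq_eq_fockNormSq, pow_eq_one_iff_of_nonneg (norm_nonneg f) two_ne_zero]

/-- The operator `C_{az}` on the Fock space for `|a| = 1`, bundled as a linear isometry. -/
noncomputable def rotate (a : ℂ) (ha : ‖a‖ = 1) : FockSpace →ₗᵢ[ℂ] FockSpace where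
  toFun f := ⟨fun z => f.1 (a * z), f.2.comp_mul ha⟩
  map_add' _ _ := rfl
  map_smul' _ _ := rfl
  norm_map' f := (pow_left_inj₀ (norm_nonneg _) (norm_nonneg f) two_ne_zero).1 <| by
    simp only [norm_sq_eq_fockNormSq]
    exact fockNormSq_comp_mul f.1 ha

theorem numRange_mul_eq_numericalRange_rotate {a : ℂ} (ha : ‖a‖ = 1) :
    numRange (fun _ => 1) (fun z => a * z) = numericalRange (rotate a ha).toLinearMap := by
  have hinner (f : FockSpace) : inner ℂ f (rotate a ha f) =
      fockInner (wcomp (fun _ => 1) (fun z => a * z) f.1) f.1 := by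
    rw [inner_eq_fockInner]
    exact congrArg (fockInner · f.1) (funext fun z => (one_mul _).symm)
  ext w
  constructor
  · rintro ⟨f, hf, hnorm, rfl⟩
    exact ⟨⟨f, hf⟩, norm_eq_one_iff.2 hnorm, hinner ⟨f, hf⟩⟩
  · rintro ⟨f, hnorm, rfl⟩
    exact ⟨f.1, f.2, norm_eq_one_iff.1 hnorm, hinner f⟩

theorem hasEigenvalue_rotate_iff {a : ℂ} (ha : ‖a‖ = 1) {w : ℂ} :
    Module.End.HasEigenvalue (rotate a ha).toLinearMap w ↔ ∃ m : ℕ, w = a ^ m := by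
  constructor
  · intro hw
    obtain ⟨f, hf⟩ := hw.exists_hasEigenvector
    have hfun : (fun z => f.1 (a * z)) = fun z => w * f.1 z :=
      congrArg Subtype.val hf.apply_eq_smul
    exact exists_eq_pow_of_comp_mul_eq f.2.1 (fun h => hf.2 (Subtype.ext h)) (congrFun hfun)
  · rintro ⟨m, rfl⟩
    let f : FockSpace := ⟨fun z => z ^ m, memFock_pow m⟩
    have hf : f ≠ 0 := fun h => one_ne_zero
      ((one_pow m).symm.trans (congrFun (congrArg Subtype.val h) (1 : ℂ)))
    have hrotate : rotate a ha f = a ^ m • f := Subtype.ext (funext fun z => mul_pow a z m)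
    exact Module.End.hasEigenvalue_of_hasEigenvector ⟨Module.End.mem_eigenspace_iff.2 hrotate, hf⟩

end FockSpace

end FockSpace

/-- If `|a| = 1` and `a` is not a root of unity, the numerical range of `C_{az}` on `F²`
is the open unit disk together with the points `a^m`, `m ≥ 0`. -/
theorem numRange_Caz_not_root_of_unity
    (a : ℂ) (ha : ‖a‖ = 1) (hroot : ∀ n : ℕ, 0 < n → a ^ n ≠ 1) :
    numRange (fun _ => 1) (fun z => a * z) =
      Metric.ball (0 : ℂ) 1 ∪ {lam | ∃ m : ℕ, lam = a ^ m} := by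
  have heig : {w | Module.End.HasEigenvalue (FockSpace.rotate a ha).toLinearMap w} =
      {lam | ∃ m : ℕ, lam = a ^ m} := Set.ext fun w => FockSpace.hasEigenvalue_rotate_iff ha
  have hnot : ¬IsOfFinOrder a := by
    simpa only [isOfFinOrder_iff_pow_eq_one, not_exists, not_and] using hroot
  have hdense : Metric.sphere 0 1 ⊆ closure {lam | ∃ m : ℕ, lam = a ^ m} := by
    simpa only [Set.range, eq_comm] using sphere_subset_closure_range_pow ha hnot
  rw [FockSpace.numRange_mul_eq_numericalRange_rotate ha,
    numericalRange_isometry_of_sphere_subset_closure _ (heig ▸ hdense), heig]
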